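/- Let p be a prime, E a finite extension of ℚ_p with residue field of cardinality q and uniformizer π_E, and M/E an unramified extension of degree 2r (r ≥ 1). Let Λ ⊆ M be an O_E-submodule that is a full lattice (finitely generated over O_E and spanning M as an E-vector space) and that is stable under multiplication by every α ∈ M with α^{q^r+1} = 1. Then Λ = π_E^b · O_M for some integer b. -/

import Mathlib

open IsLocalRing

/-!
The ring of integers of `M` is Henselian and the unit group of its residue field `k_M` is cyclic,
so an element of `k_M` of order `q ^ r + 1` lifts to a root of unity of `O_M`. A proper subfield of
`k_M` over `k_E` has at most `q ^ r` elements, too few to contain an element of that order, so the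
residue of the lift generates `k_M` over `k_E`. As `M / E` is unramified, Nakayama's lemma shows
that the lift generates `O_M` over `O_E`. A lattice stable under it is therefore a fractional ideal
of `O_M`, that is, a power of the maximal ideal, and `π_E` generates this maximal ideal.
-/

section AdicCompleteness

variable {R M : Type*} [CommRing R] [AddCommGroup M] [Module R M]

theorem isAdicComplete_of_pow_le {I J : Ideal R} {e : ℕ} (hIJ : I ≤ J) (hJI : J ^ e ≤ I)
    [IsAdicComplete I M] : IsAdicComplete J M := by
  have hpow (n : ℕ) : (J ^ ((e + 1) * n) • ⊤ : Submodule R M) ≤ I ^ n • ⊤ := by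
    rw [pow_mul]
    exact Submodule.smul_mono_left
      (Ideal.pow_right_mono ((Ideal.pow_le_pow_right e.le_succ).trans hJI) n)
  refine { haus' := fun x hx ↦ ?_, prec' := fun f hf ↦ ?_ }
  · exact IsHausdorff.haus ‹IsAdicComplete I M›.toIsHausdorff x fun n ↦ (hx _).mono (hpow n)
  · obtain ⟨L, hL⟩ := IsPrecomplete.prec ‹IsAdicComplete I M›.toIsPrecomplete
      (f := fun n ↦ f ((e + 1) * n)) fun hmn ↦ (hf (Nat.mul_le_mul_left _ hmn)).mono (hpow _)
    exact ⟨L, fun n ↦ (hf (Nat.le_mul_of_pos_left n e.succ_pos)).trans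
      ((hL n).mono (Submodule.smul_mono_left (Ideal.pow_right_mono hIJ n)))⟩

variable (M) in
theorem isPrecomplete_of_finite (I : Ideal R) [IsPrecomplete I R] [Module.Finite R M] :
    IsPrecomplete I M := by
  refine AdicCompletion.of_surjective_iff.mp fun x ↦ ?_
  obtain ⟨t, rfl⟩ := AdicCompletion.ofTensorProduct_surjective_of_finite I M x
  rw [← LinearMap.mem_range]
  induction t with
  | zero => simp
  | add s t hs ht =>
    rw [map_add]
    exact add_mem hs ht
  | tmul r m =>
    obtain ⟨r, rfl⟩ := AdicCompletion.of_surjective I R r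
    exact ⟨r • m, map_smul (AdicCompletion.of I M) r m⟩

variable (M) in
theorem isAdicComplete_of_finite [IsNoetherianRing R] (I : Ideal R) [IsAdicComplete I R]
    [Module.Finite R M] : IsAdicComplete I M where
  toIsHausdorff := .of_le_jacobson I M (IsAdicComplete.le_jacobson_bot I)
  toIsPrecomplete := isPrecomplete_of_finite M I

end AdicCompleteness

theorem isAdicComplete_maximalIdeal_of_finite (R S : Type*) [CommRing R] [CommRing S]
    [IsNoetherianRing R] [IsLocalRing R] [IsLocalRing S] [Algebra R S] [Module.Finite R S]
    [IsLocalHom (algebraMap R S)] [IsAdicComplete (maximalIdeal R) R] :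
    IsAdicComplete (maximalIdeal S) S := by
  let I := (maximalIdeal R).map (algebraMap R S)
  let := Ideal.Quotient.field (maximalIdeal R)
  have : Module.Finite (R ⧸ maximalIdeal R) (S ⧸ I) := .of_restrictScalars_finite R _ _
  have : IsArtinianRing (S ⧸ I) := .of_finite (R ⧸ maximalIdeal R) _
  obtain ⟨e, he⟩ := exists_maximalIdeal_pow_le_of_isArtinianRing_quotient I
  have hS := isAdicComplete_of_finite S (maximalIdeal R)
  have : IsAdicComplete I S :=
    { toIsHausdorff := IsHausdorff.map_algebraMap_iff.mpr hS.toIsHausdorff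
      toIsPrecomplete := IsPrecomplete.map_algebraMap_iff.mpr hS.toIsPrecomplete }
  exact isAdicComplete_of_pow_le (((local_hom_TFAE (algebraMap R S)).out 0 2).mp ‹_›) he

theorem henselianLocalRing_of_finite (R S : Type*) [CommRing R] [CommRing S]
    [IsNoetherianRing R] [IsLocalRing R] [IsLocalRing S] [Algebra R S] [Module.Finite R S]
    [IsLocalHom (algebraMap R S)] [IsAdicComplete (maximalIdeal R) R] : HenselianLocalRing S where
  is_henselian f hf a₀ h₁ h₂ :=
    have := isAdicComplete_maximalIdeal_of_finite R S
    HenselianRing.is_henselian f hf a₀ h₁ (h₂.map _)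

section RootsOfUnity

open Module Polynomial

theorem exists_pow_eq_one_residue_eq {R : Type*} [CommRing R] [HenselianLocalRing R] {n : ℕ}
    (hn : (n : ResidueField R) ≠ 0) {x : ResidueField R} (hx : x ^ n = 1) :
    ∃ a : R, a ^ n = 1 ∧ residue R a = x := by
  have hn0 : n ≠ 0 := by rintro rfl; simp at hn
  have hx0 : x ≠ 0 := by rintro rfl; simp [hn0] at hx
  have hensel := ((HenselianLocalRing.TFAE R).out 0 1).mp ‹HenselianLocalRing R›
  obtain ⟨a, ha, hax⟩ := hensel (X ^ n - 1) (monic_X_pow_sub_C 1 hn0) x (by simp [hx])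
    (by simp [derivative_X_pow, hn, hx0])
  exact ⟨a, by simpa [sub_eq_zero] using ha, hax⟩

theorem exists_orderOf_eq_of_dvd_card_sub_one {k : Type*} [Field k] [Finite k] {n : ℕ}
    (hn : n ∣ Nat.card k - 1) : ∃ x : k, orderOf x = n := by
  obtain ⟨g, hg⟩ := IsCyclic.exists_ofOrder_eq_natCard (α := kˣ)
  rw [← Nat.card_units, ← hg] at hn
  refine ⟨(g ^ (orderOf g / n) : kˣ), ?_⟩
  rw [orderOf_units, orderOf_pow_orderOf_div (orderOf_pos g).ne' hn]

theorem adjoin_eq_top_of_card_pow_le_orderOf {k l : Type*} [Field k] [Field l] [Finite l]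
    [Algebra k l] {a : l} (ha : Nat.card k ^ (finrank k l / 2) ≤ orderOf a) :
    Algebra.adjoin k {a} = ⊤ := by
  have : Finite k := Finite.of_injective _ (algebraMap k l).injective
  let F := IntermediateField.adjoin k {a}
  suffices hF : F = ⊤ by
    rw [← IntermediateField.adjoin_simple_toSubalgebra_of_isAlgebraic (.of_finite k a),
      show IntermediateField.adjoin k {a} = ⊤ from hF, IntermediateField.top_toSubalgebra]
  by_contra hF
  have hlt : orderOf a < Nat.card k ^ finrank k F := by
    let a' : F := ⟨a, IntermediateField.mem_adjoin_simple_self k a⟩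
    rw [← natCard_eq_pow_finrank,
      show orderOf a = orderOf a' from orderOf_injective (F.val : F →* l) F.val.injective a']
    exact orderOf_lt_card a'
  have hle : finrank k F ≤ finrank k l / 2 := by
    have hlt := IntermediateField.finrank_lt_of_gt (lt_top_iff_ne_top.mpr hF)
    rw [IntermediateField.finrank_top] at hlt
    rw [Nat.le_div_iff_mul_le two_pos, ← finrank_mul_finrank k F l]
    exact Nat.mul_le_mul_left _ hlt
  exact (hlt.trans_le ((Nat.pow_le_pow_right Nat.card_pos hle).trans ha)).false

theorem formallyUnramified_of_finrank_residueField_eq {R S : Type*} [CommRing R] [CommRing S]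
    [IsLocalRing R] [IsLocalRing S] [Algebra R S] [Module.Finite R S] [Module.Free R S]
    [IsLocalHom (algebraMap R S)] [Algebra.IsSeparable (ResidueField R) (ResidueField S)]
    (h : finrank (ResidueField R) (ResidueField S) = finrank R S) :
    Algebra.FormallyUnramified R S := by
  have hle := ((local_hom_TFAE (algebraMap R S)).out 0 2).mp ‹_›
  let : Module (ResidueField R) (S ⧸ (maximalIdeal R).map (algebraMap R S)) :=
    (inferInstance : Module (R ⧸ maximalIdeal R) _)
  have : IsScalarTower R (ResidueField R) (S ⧸ (maximalIdeal R).map (algebraMap R S)) :=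
    (inferInstance : IsScalarTower R (R ⧸ maximalIdeal R) _)
  have : Module.Finite (ResidueField R) (S ⧸ (maximalIdeal R).map (algebraMap R S)) :=
    .of_restrictScalars_finite R _ _
  let π : (S ⧸ (maximalIdeal R).map (algebraMap R S)) →ₗ[R] ResidueField S :=
    (Ideal.Quotient.factorₐ R hle).toLinearMap
  let φ := π.extendScalarsOfSurjective (residue_surjective (R := R))
  have hφ : Function.Injective φ :=
    (LinearMap.injective_iff_surjective_of_finrank_eq_finrank
      (finrank_quotient_map.trans h.symm)).mpr (Ideal.Quotient.factor_surjective hle)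
  refine .of_map_maximalIdeal (hle.antisymm fun y hy ↦ ?_)
  rw [← Ideal.Quotient.eq_zero_iff_mem, ← map_eq_zero_iff φ hφ]
  exact (residue_eq_zero_iff y).mpr hy

theorem exists_pow_eq_one_adjoin_eq_top {A B : Type*} [CommRing A] [CommRing B] [IsLocalRing A]
    [HenselianLocalRing B] [Algebra A B] [Module.Finite A B] [FaithfulSMul A B]
    [Algebra.FormallyUnramified A B] [Finite (ResidueField B)] {n : ℕ}
    (hdvd : n ∣ Nat.card (ResidueField B) - 1)
    (hle : Nat.card (ResidueField A) ^ (finrank (ResidueField A) (ResidueField B) / 2) ≤ n) :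
    ∃ a : B, a ^ n = 1 ∧ Algebra.adjoin A {a} = ⊤ := by
  obtain ⟨x, rfl⟩ := exists_orderOf_eq_of_dvd_card_sub_one hdvd
  have hcast : (orderOf x : ResidueField B) ≠ 0 := by
    have := Fintype.ofFinite (ResidueField B)
    refine ne_zero_of_dvd_ne_zero ?_ (Nat.cast_dvd_cast hdvd)
    rw [Nat.card_eq_fintype_card, Nat.cast_pred Fintype.card_pos, FiniteField.cast_card_eq_zero,
      zero_sub]
    exact neg_ne_zero.mpr one_ne_zero
  obtain ⟨a, ha, rfl⟩ := exists_pow_eq_one_residue_eq hcast (pow_orderOf_eq_one x)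
  exact ⟨a, ha, (adjoin_residue_eq_top_iff_adjoin_eq_top a).mp
    (adjoin_eq_top_of_card_pow_le_orderOf hle)⟩

end RootsOfUnity

section StableLattices

open Module

theorem smul_mem_of_adjoin_eq_top {A B V : Type*} [CommSemiring A] [Semiring B] [Algebra A B]
    [AddCommMonoid V] [Module A V] [Module B V] [IsScalarTower A B V] {s : Set B}
    (hs : Algebra.adjoin A s = ⊤) {N : Submodule A V} (hN : ∀ b ∈ s, ∀ z ∈ N, b • z ∈ N)
    (b : B) : ∀ z ∈ N, b • z ∈ N := by
  have hb : b ∈ Algebra.adjoin A s := hs ▸ Algebra.mem_top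
  induction hb using Algebra.adjoin_induction with
  | mem b hb => exact hN b hb
  | algebraMap a => exact fun z hz ↦ by simpa using N.smul_mem a hz
  | add b c _ _ hb hc => exact fun z hz ↦ by simpa [add_smul] using add_mem (hb z hz) (hc z hz)
  | mul b c _ _ hb hc => exact fun z hz ↦ by simpa [mul_smul] using hb _ (hc z hz)

theorem exists_eq_span_zpow_of_fg {R K : Type*} [CommRing R] [IsDomain R]
    [IsDiscreteValuationRing R] [Field K] [Algebra R K] [IsFractionRing R K] {ϖ : R}
    (hϖ : Irreducible ϖ) {N : Submodule R K} (hfg : N.FG) (hne : N ≠ ⊥) :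
    ∃ b : ℤ, N = Submodule.span R {algebraMap R K ϖ ^ b} := by
  let I : FractionalIdeal (nonZeroDivisors R) K := ⟨N, FractionalIdeal.isFractional_of_fg hfg⟩
  obtain ⟨⟨x, hx : N = R ∙ x⟩⟩ := FractionalIdeal.isPrincipal I
  have hx0 : x ≠ 0 := by rintro rfl; simp_all
  obtain ⟨b, u, rfl⟩ := IsDiscreteValuationRing.exists_units_eq_smul_zpow_of_irreducible hϖ hx0
  exact ⟨b, hx.trans (Submodule.span_singleton_group_smul_eq R u _)⟩

theorem exists_eq_span_zpow_of_pow_eq_one_smul_mem {A B K : Type*} [CommRing A] [IsLocalRing A]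
    [CommRing B] [IsDomain B] [IsDiscreteValuationRing B] [HenselianLocalRing B] [Algebra A B]
    [Module.Finite A B] [FaithfulSMul A B] [Algebra.FormallyUnramified A B]
    [Finite (ResidueField B)] [Field K] [Algebra A K] [Algebra B K] [IsScalarTower A B K]
    [IsFractionRing B K] {ϖ : A} (hϖ : maximalIdeal A = Ideal.span {ϖ}) {n : ℕ}
    (hdvd : n ∣ Nat.card (ResidueField B) - 1)
    (hle : Nat.card (ResidueField A) ^ (finrank (ResidueField A) (ResidueField B) / 2) ≤ n)
    {N : Submodule A K} (hfg : N.FG) (hne : N ≠ ⊥)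
    (hstab : ∀ a : B, a ^ n = 1 → ∀ z ∈ N, a • z ∈ N) :
    ∃ b : ℤ, N = (Submodule.span B {algebraMap A K ϖ ^ b}).restrictScalars A := by
  obtain ⟨a, ha, hadj⟩ := exists_pow_eq_one_adjoin_eq_top hdvd hle
  have hsmul := smul_mem_of_adjoin_eq_top hadj (N := N) (by simpa using hstab a ha)
  let N' : Submodule B K := { N with smul_mem' := fun c z hz ↦ hsmul c z hz }
  have hϖB : Irreducible (algebraMap A B ϖ) := by
    rw [IsDiscreteValuationRing.irreducible_iff_uniformizer,
      ← Algebra.FormallyUnramified.map_maximalIdeal (R := A), hϖ, Ideal.map_span,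
      Set.image_singleton]
  have hN'ne : N' ≠ ⊥ := fun h ↦ hne (SetLike.coe_injective (congrArg SetLike.coe h :))
  obtain ⟨b, hb⟩ := exists_eq_span_zpow_of_fg hϖB
    (.of_restrictScalars A (show (N'.restrictScalars A).FG from hfg)) hN'ne
  refine ⟨b, ?_⟩
  rw [IsScalarTower.algebraMap_apply A B K, ← hb]
  rfl

theorem isDiscreteValuationRing_integralClosure (R K L : Type*) [CommRing R] [IsDedekindDomain R]
    [Field K] [Algebra R K] [IsFractionRing R K] [Field L] [Algebra K L]
    [FiniteDimensional K L] [Algebra.IsSeparable K L] [Algebra R L] [IsScalarTower R K L]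
    [IsLocalRing (integralClosure R L)] (hR : ¬ IsField R) :
    IsDiscreteValuationRing (integralClosure R L) := by
  have hD := integralClosure.isDedekindDomain R K L
  have : FaithfulSMul R L := .trans R K L
  refine ((IsDiscreteValuationRing.TFAE _ fun h ↦ hR ?_).out 0 2).mpr hD
  exact isField_of_isIntegral_of_isField
    (FaithfulSMul.algebraMap_injective R (integralClosure R L)) h

theorem stmt_14_general {R K E M : Type*} [CommRing R] [IsDomain R] [IsDiscreteValuationRing R]
    [IsAdicComplete (maximalIdeal R) R] [Finite (ResidueField R)]
    [Field K] [Algebra R K] [IsFractionRing R K] [Field E] [Field M]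
    [Algebra K E] [Algebra K M] [FiniteDimensional K M] [Algebra.IsSeparable K M]
    [Algebra R E] [IsScalarTower R K E] [Algebra R M] [IsScalarTower R K M]
    [Algebra E M] [IsScalarTower K E M] [IsScalarTower R E M]
    [IsLocalRing (integralClosure R E)] [IsLocalRing (integralClosure R M)]
    (hunram : Nat.card (ResidueField (integralClosure R M)) =
      Nat.card (ResidueField (integralClosure R E)) ^ finrank E M)
    {πE : E} {hπEmem : πE ∈ integralClosure R E}
    (hπE : maximalIdeal (integralClosure R E) =
      Ideal.span {(⟨πE, hπEmem⟩ : integralClosure R E)})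
    {n : ℕ} (hdvd : n ∣ Nat.card (ResidueField (integralClosure R M)) - 1)
    (hle : Nat.card (ResidueField (integralClosure R E)) ^ (finrank E M / 2) ≤ n)
    {Λ : Submodule (integralClosure R E) M} (hΛfg : Λ.FG) (hΛne : Λ ≠ ⊥)
    (hΛstab : ∀ α : M, α ^ n = 1 → ∀ z ∈ Λ, α * z ∈ Λ) :
    ∃ b : ℤ, ∀ z : M, z ∈ Λ ↔ ∃ w ∈ integralClosure R M, z = algebraMap E M πE ^ b * w := by
  have : FiniteDimensional K E := .left K E M
  have : Algebra.IsSeparable K E := Algebra.isSeparable_tower_bot_of_isSeparable K E M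
  let f := (IsScalarTower.toAlgHom R E M).mapIntegralClosure
  let := f.toRingHom.toAlgebra
  have : IsScalarTower R (integralClosure R E) (integralClosure R M) :=
    .of_algebraMap_eq fun x ↦ (f.commutes x).symm
  have : IsScalarTower (integralClosure R E) (integralClosure R M) M :=
    .of_algebraMap_eq fun _ ↦ rfl
  have hR := IsDiscreteValuationRing.not_isField R
  have := isDiscreteValuationRing_integralClosure R K E hR
  have := isDiscreteValuationRing_integralClosure R K M hR
  have := integralClosure.isFractionRing_of_finite_extension (A := R) K E
  have := integralClosure.isFractionRing_of_finite_extension (A := R) K M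
  have := IsIntegralClosure.finite R K E (integralClosure R E)
  have := IsIntegralClosure.finite R K M (integralClosure R M)
  have : FaithfulSMul R E := .trans R K E
  have : FaithfulSMul R M := .trans R K M
  have : FaithfulSMul (integralClosure R E) M := .trans _ E M
  have : FaithfulSMul (integralClosure R E) (integralClosure R M) := .tower_bot _ _ M
  have : Module.Finite (integralClosure R E) (integralClosure R M) :=
    .of_restrictScalars_finite R _ _
  have : Finite (ResidueField (integralClosure R E)) :=
    ResidueField.finite_of_finite (R := R) inferInstance
  have : Finite (ResidueField (integralClosure R M)) :=
    ResidueField.finite_of_finite (R := R) inferInstance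
  have := henselianLocalRing_of_finite R (integralClosure R M)
  have hfinrank : finrank (ResidueField (integralClosure R E))
      (ResidueField (integralClosure R M)) = finrank E M := by
    rw [natCard_eq_pow_finrank (K := ResidueField (integralClosure R E))] at hunram
    exact Nat.pow_right_injective Finite.one_lt_card hunram
  have := formallyUnramified_of_finrank_residueField_eq
    (hfinrank.trans (IsFractionRing.finrank_eq (integralClosure R E) E (integralClosure R M) M))
  obtain ⟨b, rfl⟩ := exists_eq_span_zpow_of_pow_eq_one_smul_mem hπE hdvd (hfinrank ▸ hle)
    hΛfg hΛne fun a ha ↦ hΛstab a (congrArg Subtype.val ha)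
  refine ⟨b, fun z ↦ ?_⟩
  simp [Submodule.mem_span_singleton, Algebra.smul_def, mul_comm, eq_comm]

end StableLattices

/-- Let `E` be a finite extension of `ℚ_p` with residue cardinality `q`
and uniformizer `π_E`, and `M/E` unramified of degree `2r`.  If `Λ ⊆ M` is a full
`O_E`-lattice (finitely generated and spanning `M` over `E`) stable under multiplication by
every `α ∈ M` with `α^{q^r+1} = 1`, then `Λ = π_E^b · O_M` for some integer `b`. -/
theorem stmt_14 (p q r : ℕ) [Fact p.Prime] (hr : 1 ≤ r)
    {E M : Type*} [Field E] [Field M]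
    [Algebra ℚ_[p] E] [FiniteDimensional ℚ_[p] E]
    [Algebra ℚ_[p] M] [FiniteDimensional ℚ_[p] M]
    [Algebra ℤ_[p] E] [IsScalarTower ℤ_[p] ℚ_[p] E]
    [Algebra ℤ_[p] M] [IsScalarTower ℤ_[p] ℚ_[p] M]
    [Algebra E M] [IsScalarTower ℚ_[p] E M] [IsScalarTower ℤ_[p] E M]
    [IsLocalRing (integralClosure ℤ_[p] E)] [IsLocalRing (integralClosure ℤ_[p] M)]
    -- `M/E` unramified of degree `2r`: residue degree equals the field degree
    (hEM : Module.finrank E M = 2 * r)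
    (hqE : Nat.card (ResidueField (integralClosure ℤ_[p] E)) = q)
    (hqM : Nat.card (ResidueField (integralClosure ℤ_[p] M)) = q ^ (2 * r))
    -- a uniformizer `π_E` of `E`
    (πE : E) (hπEmem : πE ∈ integralClosure ℤ_[p] E)
    (hπE : maximalIdeal (integralClosure ℤ_[p] E) =
      Ideal.span {(⟨πE, hπEmem⟩ : integralClosure ℤ_[p] E)})
    -- the action of the ring of integers `O_E` on `M`
    [Algebra (integralClosure ℤ_[p] E) M] [IsScalarTower (integralClosure ℤ_[p] E) E M]
    -- a full `O_E`-lattice `Λ` in `M`, stable under the roots of unity of order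
    -- dividing `q^r + 1`
    (Λ : Submodule (integralClosure ℤ_[p] E) M)
    (hΛfg : Λ.FG) (hΛfull : Submodule.span E (Λ : Set M) = ⊤)
    (hΛstab : ∀ α : M, α ^ (q ^ r + 1) = 1 → ∀ z ∈ Λ, α * z ∈ Λ) :
    ∃ b : ℤ, ∀ z : M,
      z ∈ Λ ↔ ∃ w ∈ integralClosure ℤ_[p] M, z = algebraMap E M πE ^ b * w := by
  have hdvd : q ^ r + 1 ∣ q ^ (2 * r) - 1 :=
    ⟨q ^ r - 1, by rw [← Nat.sq_sub_sq, one_pow, ← pow_mul, mul_comm]⟩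
  have hΛne : Λ ≠ ⊥ := by
    rintro rfl
    simp at hΛfull
  subst hqE
  exact stmt_14_general (K := ℚ_[p]) (hEM ▸ hqM) hπE (hqM ▸ hdvd) (by simp [hEM])
    hΛfg hΛne hΛstab
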